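/- Let E and F be real normed vector spaces, let r > 0, and let M : E → F be twice differentiable on the open ball B(x, r) with second derivative D²M that is Lipschitz on B(x, r) with constant K ≥ 0. Then for every u ∈ E and every h > 0 with h·‖u‖ < r, the deviation of norms satisfies |‖(M(x + h·u) − M(x − h·u))/(2h)‖ − ‖DM(x) u‖| ≤ (K/6)·h²·‖u‖³. -/

import Mathlib

/-!
Along the line through `x` in direction `u`, let
`g t = M (x + t u) - M (x - t u) - 2 t DM(x) u`. Then `g 0 = g' 0 = 0`, and
`g'' t = (D²M (x + t u) - D²M (x - t u)) u u` has norm at most `2 K t ‖u‖³` by the Lipschitz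
hypothesis. Applying the mean value inequality twice (`norm_le_of_hasDerivAt_of_norm_deriv_le`)
gives `‖g h‖ ≤ K h³ ‖u‖³ / 3`; the claim follows by dividing by `2 h` and using the reverse
triangle inequality. The mean value inequality replaces an integral Taylor remainder, so `F` need
not be complete.
-/

/-- Mean value inequality with a monomial bound: a function vanishing at `0` whose derivative is
bounded by `C (n + 1) t ^ n` on `[0, h]` is bounded by `C t ^ (n + 1)` there. -/
theorem norm_le_of_hasDerivAt_of_norm_deriv_le
    {F : Type*} [NormedAddCommGroup F] [NormedSpace ℝ F] {f f' : ℝ → F} {h C : ℝ} (n : ℕ)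
    (h0 : f 0 = 0) (hf : ∀ t ∈ Set.Icc 0 h, HasDerivAt f (f' t) t)
    (hb : ∀ t ∈ Set.Icc 0 h, ‖f' t‖ ≤ C * ((n + 1) * t ^ n)) :
    ∀ t ∈ Set.Icc 0 h, ‖f t‖ ≤ C * t ^ (n + 1) := by
  intro t ht
  refine image_norm_le_of_norm_deriv_right_le_deriv_boundary (f := f) (f' := f')
    (B := fun t => C * t ^ (n + 1)) (B' := fun t => C * ((n + 1) * t ^ n))
    (fun s hs => (hf s hs).continuousAt.continuousWithinAt)
    (fun s hs => (hf s (Set.Ico_subset_Icc_self hs)).hasDerivWithinAt) (by simp [h0]) ?_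
    (fun s hs => hb s (Set.Ico_subset_Icc_self hs)) ht
  intro s
  simpa using (hasDerivAt_pow (n + 1) s).const_mul C

/-- the deviation between the norm of the symmetric finite-difference response
and the norm of `DM(x) u` is at most `(K/6) h² ‖u‖³`. -/
theorem symmetric_finite_difference_norm_deviation_bound
    {E F : Type*} [NormedAddCommGroup E] [NormedSpace ℝ E]
    [NormedAddCommGroup F] [NormedSpace ℝ F]
    (M : E → F) (M' : E → E →L[ℝ] F) (M'' : E → E →L[ℝ] E →L[ℝ] F)
    (x : E) (r : ℝ) (hr : 0 < r) (K : ℝ) (hK : 0 ≤ K)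
    (hM : ∀ y ∈ Metric.ball x r, HasFDerivAt M (M' y) y)
    (hM' : ∀ y ∈ Metric.ball x r, HasFDerivAt M' (M'' y) y)
    (hLip : ∀ y ∈ Metric.ball x r, ∀ z ∈ Metric.ball x r, ‖M'' y - M'' z‖ ≤ K * ‖y - z‖) :
    ∀ u : E, ∀ h : ℝ, 0 < h → h * ‖u‖ < r →
      |‖(2 * h)⁻¹ • (M (x + h • u) - M (x - h • u))‖ - ‖M' x u‖| ≤ K / 6 * h ^ 2 * ‖u‖ ^ 3 := by
  intro u h hh hur
  have hplus : ∀ t ∈ Set.Icc 0 h, x + t • u ∈ Metric.ball x r := by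
    intro t ht
    have : t * ‖u‖ ≤ h * ‖u‖ := mul_le_mul_of_nonneg_right ht.2 (norm_nonneg u)
    simpa [norm_smul, abs_of_nonneg ht.1] using this.trans_lt hur
  have hminus : ∀ t ∈ Set.Icc 0 h, x - t • u ∈ Metric.ball x r := by
    intro t ht
    simpa [dist_eq_norm] using hplus t ht
  have dplus : ∀ t : ℝ, HasDerivAt (fun t : ℝ => x + t • u) u t := fun t => by
    simpa using ((hasDerivAt_id t).smul_const u).const_add x
  have dminus : ∀ t : ℝ, HasDerivAt (fun t : ℝ => x - t • u) (-u) t := fun t => by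
    simpa using ((hasDerivAt_id t).smul_const u).const_sub x
  have hg' : ∀ t ∈ Set.Icc 0 h,
      ‖M' (x + t • u) u + M' (x - t • u) u - (2 : ℝ) • M' x u‖ ≤ K * ‖u‖ ^ 3 * t ^ (1 + 1) := by
    refine norm_le_of_hasDerivAt_of_norm_deriv_le
      (f := fun t : ℝ => M' (x + t • u) u + M' (x - t • u) u - (2 : ℝ) • M' x u)
      (f' := fun t => (M'' (x + t • u) - M'' (x - t • u)) u u) 1
      (by simp [two_smul]) ?_ ?_
    · intro t ht
      have h1 : HasDerivAt (fun t : ℝ => M' (x + t • u) u) (M'' (x + t • u) u u) t :=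
        (ContinuousLinearMap.apply ℝ F u).hasFDerivAt.comp_hasDerivAt t
          ((hM' _ (hplus t ht)).comp_hasDerivAt t (dplus t))
      have h2 : HasDerivAt (fun t : ℝ => M' (x - t • u) u) (M'' (x - t • u) (-u) u) t :=
        (ContinuousLinearMap.apply ℝ F u).hasFDerivAt.comp_hasDerivAt t
          ((hM' _ (hminus t ht)).comp_hasDerivAt t (dminus t))
      refine ((h1.add h2).sub_const ((2 : ℝ) • M' x u)).congr_deriv ?_
      simp [sub_eq_add_neg]
    · intro t ht
      have hdist : ‖(x + t • u) - (x - t • u)‖ = 2 * t * ‖u‖ := by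
        rw [show (x + t • u) - (x - t • u) = (2 * t) • u by module, norm_smul, Real.norm_eq_abs,
          abs_of_nonneg (by linarith [ht.1])]
      calc ‖(M'' (x + t • u) - M'' (x - t • u)) u u‖
          ≤ ‖M'' (x + t • u) - M'' (x - t • u)‖ * ‖u‖ * ‖u‖ :=
            ContinuousLinearMap.le_opNorm₂ _ u u
        _ ≤ (K * (2 * t * ‖u‖)) * ‖u‖ * ‖u‖ := by
            have := hLip _ (hplus t ht) _ (hminus t ht)
            rw [hdist] at this
            gcongr
        _ = K * ‖u‖ ^ 3 * (((1 : ℕ) + 1) * t ^ 1) := by push_cast; ring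
  have hg : ‖M (x + h • u) - M (x - h • u) - (2 * h) • M' x u‖
      ≤ K * ‖u‖ ^ 3 / 3 * h ^ (2 + 1) := by
    refine norm_le_of_hasDerivAt_of_norm_deriv_le
      (f := fun t : ℝ => M (x + t • u) - M (x - t • u) - (2 * t) • M' x u)
      (f' := fun t => M' (x + t • u) u + M' (x - t • u) u - (2 : ℝ) • M' x u) 2
      (by simp) ?_ ?_ h ⟨hh.le, le_rfl⟩
    · intro t ht
      have h1 := (hM _ (hplus t ht)).comp_hasDerivAt t (dplus t)
      have h2 := (hM _ (hminus t ht)).comp_hasDerivAt t (dminus t)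
      have h3 := ((hasDerivAt_id t).const_mul 2).smul_const (M' x u)
      refine ((h1.sub h2).sub h3).congr_deriv ?_
      simp
    · intro t ht
      refine (hg' t ht).trans_eq ?_
      push_cast
      ring
  have hscale : (2 * h)⁻¹ • (M (x + h • u) - M (x - h • u)) - M' x u
      = (2 * h)⁻¹ • (M (x + h • u) - M (x - h • u) - (2 * h) • M' x u) := by
    rw [smul_sub _ _ ((2 * h) • M' x u), inv_smul_smul₀ (by positivity)]
  refine (abs_norm_sub_norm_le _ _).trans ?_
  rw [hscale, norm_smul, Real.norm_eq_abs, abs_of_pos (by positivity)]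
  calc (2 * h)⁻¹ * ‖M (x + h • u) - M (x - h • u) - (2 * h) • M' x u‖
      ≤ (2 * h)⁻¹ * (K * ‖u‖ ^ 3 / 3 * h ^ (2 + 1)) := by gcongr
    _ = K / 6 * h ^ 2 * ‖u‖ ^ 3 := by field_simp; ring
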